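/- arXiv:cs/0612120 — 2 statements merged into one kernel-verified Lean document; each statement's English description precedes it below -/
import Mathlib

section
/- Let Σ be a set, 𝒜 a complete lattice satisfying the descending chain condition, together with a Galois insertion (α, γ) of 𝒜 into the dual lattice of Moore families on Σ, and F a set of finitary operations on ℘(Σ) such that either (i) for every Moore family ℳ, α(M(F(ℳ))) = α(M(F(γ(α(ℳ))))), or (ii) for every a ∈ 𝒜, S_F(γ(a)) lies in the image of γ. Let g ∈ F and suppose given, for each a ∈ 𝒜, a subset subRefiners_g(a) ⊆ Refiners_g^𝒜(a) such that subRefiners_g(a) = ∅ ⟺ Refiners_g^𝒜(a) = ∅. Then every finite sequence a₀ = a, a_{i+1} = refine_{f_i}^𝒜(S⃗_i, a_i), in which S⃗_i ∈ subRefiners_g(a_i) whenever f_i = g and S⃗_i ∈ Refiners_{f_i}^𝒜(a_i) whenever f_i ≠ g, that ends at an element a_n with subRefiners_g(a_n) = ∅ and Refiners_f^𝒜(a_n) = ∅ for every f ∈ F ∖ {g}, satisfies a_n = α(S_F(γ(a))). -/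
set_option linter.unusedVariables false

universe u v

variable {X : Type u} {A : Type v}

/-- A Moore family: a collection of subsets closed under arbitrary intersections. -/
def IsMoore (M : Set (Set X)) : Prop := ∀ S ⊆ M, ⋂₀ S ∈ M

/-- The least Moore family containing `C`. -/
def mClose (C : Set (Set X)) : Set (Set X) := ⋂₀ {M | IsMoore M ∧ C ⊆ M}

/-- A disjunctive Moore family: additionally closed under arbitrary unions. -/
def IsDisjMoore (M : Set (Set X)) : Prop := IsMoore M ∧ ∀ S ⊆ M, ⋃₀ S ∈ M

/-- The least disjunctive Moore family containing `C`. -/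
def dClose (C : Set (Set X)) : Set (Set X) := ⋂₀ {M | IsDisjMoore M ∧ C ⊆ M}

/-- The closure operator associated with a Moore family. -/
def mu (M : Set (Set X)) (S : Set X) : Set X := ⋂₀ {T | T ∈ M ∧ S ⊆ T}

/-- The partition (as a setoid) induced by a Moore family:
`s ≡ s'` iff `μ {s} = μ {s'}`. -/
def prS (M : Set (Set X)) : Setoid X :=
  ⟨fun s t => mu M {s} = mu M {t}, ⟨fun _ => rfl, Eq.symm, Eq.trans⟩⟩

/-- The Moore family of all `P`-saturated sets (unions of blocks of `P`). -/
def padS (P : Setoid X) : Set (Set X) := {S | ∀ s ∈ S, ∀ t, P.r s t → t ∈ S}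

/-- `P` refines `Q`: every block of `P` is contained in a block of `Q`. -/
def refines (P Q : Setoid X) : Prop := ∀ s t, P.r s t → Q.r s t

/-- A finitary operation on `℘(X)`: an arity `n` together with a map `℘(X)^n → ℘(X)`. -/
abbrev Op (X : Type u) := (n : ℕ) × ((Fin n → Set X) → Set X)

/-- The image `F(S)` of a set of operations on a collection of subsets. -/
def imageF (F : Set (Op X)) (S : Set (Set X)) : Set (Set X) :=
  {T | ∃ f ∈ F, ∃ args : Fin f.1 → Set X, (∀ i, args i ∈ S) ∧ T = f.2 args}

/-- Forward `F`-completeness: `F(S) ⊆ S`. -/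
def FComplete (F : Set (Op X)) (S : Set (Set X)) : Prop := imageF F S ⊆ S

/-- The forward `F`-complete shell: the least forward `F`-complete Moore family
containing `M`. -/
def shellF (F : Set (Op X)) (M : Set (Set X)) : Set (Set X) :=
  ⋂₀ {B | IsMoore B ∧ FComplete F B ∧ M ⊆ B}

/-- Predecessor operator of a transition relation. -/
def preR (r : X → X → Prop) (S : Set X) : Set X := {s | ∃ t ∈ S, r s t}

/-- The split of a partition `P` by a set `T`: blocks are the nonempty sets
among `B ∩ T` and `B \ T` for blocks `B` of `P`. -/
def splitS (T : Set X) (P : Setoid X) : Setoid X :=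
  ⟨fun s t => P.r s t ∧ (s ∈ T ↔ t ∈ T),
   ⟨fun s => ⟨P.iseqv.refl s, Iff.rfl⟩,
    fun h => ⟨P.iseqv.symm h.1, h.2.symm⟩,
    fun h1 h2 => ⟨P.iseqv.trans h1.1 h2.1, h1.2.trans h2.2⟩⟩⟩

/-- Abstract refinement: `refine_f^A(S, a) = α(M(γ(a) ∪ {f(S)}))`. -/
def refineA [Preorder A] (al : Set (Set X) → A) (ga : A → Set (Set X))
    (f : Op X) (S : Fin f.1 → Set X) (a : A) : A :=
  al (mClose (ga a ∪ {f.2 S}))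

/-- Abstract refiners: tuples in `γ(a)^n` whose refinement is strictly below `a`. -/
def refinersA [Preorder A] (al : Set (Set X) → A) (ga : A → Set (Set X))
    (f : Op X) (a : A) : Set (Fin f.1 → Set X) :=
  {S | (∀ i, S i ∈ ga a) ∧ refineA al ga f S a < a}

/-- One step of the GPT algorithm: refine by some refiner of some `f ∈ F`. -/
def StepA [Preorder A] (F : Set (Op X)) (al : Set (Set X) → A) (ga : A → Set (Set X))
    (a b : A) : Prop :=
  ∃ f ∈ F, ∃ S : Fin f.1 → Set X, S ∈ refinersA al ga f a ∧ b = refineA al ga f S a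

/-- The setoid induced by a collection of sets: `s ≡ t` iff no set of the
collection separates them. -/
def indSetoid (C : Set (Set X)) : Setoid X :=
  ⟨fun s t => ∀ T ∈ C, (s ∈ T ↔ t ∈ T),
   ⟨fun _ _ _ => Iff.rfl, fun h T hT => (h T hT).symm,
    fun h1 h2 T hT => (h1 T hT).trans (h2 T hT)⟩⟩

/-- The block of `P` containing `s`. -/
def blockOf (P : Setoid X) (s : X) : Set X := {t | P.r s t}

/-- The existential-until operator `EU(S₁, S₂)`. -/
def EUset (r : X → X → Prop) (S1 S2 : Set X) : Set X :=
  S2 ∪ {s | s ∈ S1 ∧ ∃ (n : ℕ) (p : ℕ → X), p 0 = s ∧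
    (∀ i < n, p i ∈ S1 ∧ r (p i) (p (i+1))) ∧ p n ∈ S2}


theorem mClose_moore (C : Set (Set X)) : IsMoore (mClose C) := by
  intro S hS M hM
  exact hM.1 S (fun T hT => hS hT M hM)

theorem subset_mClose (C : Set (Set X)) : C ⊆ mClose C := fun T hT M hM => hM.2 hT

theorem mClose_min {C M : Set (Set X)} (hM : IsMoore M) (h : C ⊆ M) : mClose C ⊆ M :=
  fun T hT => hT M ⟨hM, h⟩

theorem shell_moore (F : Set (Op X)) (C : Set (Set X)) : IsMoore (shellF F C) := by
  intro S hS M hM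
  exact hM.1 S (fun T hT => hS hT M hM)

theorem shell_complete (F : Set (Op X)) (C : Set (Set X)) : FComplete F (shellF F C) := by
  rintro T ⟨f, hf, args, ha, rfl⟩ M hM
  exact hM.2.1 ⟨f, hf, args, fun i => ha i M hM, rfl⟩

theorem subset_shell (F : Set (Op X)) (C : Set (Set X)) : C ⊆ shellF F C :=
  fun T hT M hM => hM.2.2 hT

theorem stmt2 [CompleteLattice A]
    (hdcc : ∀ g : ℕ → A, ¬ StrictAnti g)
    (al : Set (Set X) → A) (ga : A → Set (Set X))
    (hga : ∀ a : A, IsMoore (ga a))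
    (hadj : ∀ M : Set (Set X), IsMoore M → ∀ a : A, a ≤ al M ↔ M ⊆ ga a)
    (hins : ∀ a : A, al (ga a) = a)
    (F : Set (Op X))
    (hcond : (∀ M : Set (Set X), IsMoore M →
                al (mClose (imageF F M)) = al (mClose (imageF F (ga (al M))))) ∨
             (∀ a : A, shellF F (ga a) ∈ Set.range ga))
    (g : Op X) (hgF : g ∈ F)
    (sub : A → Set (Fin g.1 → Set X))
    (hsub : ∀ b : A, sub b ⊆ refinersA al ga g b)
    (hsubeq : ∀ b : A, sub b = ∅ ↔ refinersA al ga g b = ∅)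
    (a : A) (n : ℕ) (seq : ℕ → A) (h0 : seq 0 = a)
    (hstep : ∀ i < n,
      (∃ S ∈ sub (seq i), seq (i + 1) = refineA al ga g S (seq i)) ∨
      (∃ f ∈ F, f ≠ g ∧ ∃ S ∈ refinersA al ga f (seq i),
        seq (i + 1) = refineA al ga f S (seq i)))
    (hend1 : sub (seq n) = ∅)
    (hend2 : ∀ f ∈ F, f ≠ g → refinersA al ga f (seq n) = ∅) :
    seq n = al (shellF F (ga a)) := by
  have hext : ∀ M : Set (Set X), IsMoore M → M ⊆ ga (al M) :=
    fun M hM => (hadj M hM _).1 le_rfl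
  have hanti : ∀ b c : A, b ≤ c → ga c ⊆ ga b := fun b c h =>
    (hadj _ (hga c) b).1 (by rw [hins]; exact h)
  have hmono : ∀ M N : Set (Set X), IsMoore M → IsMoore N → M ⊆ N → al N ≤ al M :=
    fun M N hM hN h => (hadj M hM _).2 (h.trans (hext N hN))
  have hsm := shell_moore F (ga a)
  have hsc := shell_complete F (ga a)
  have hss := subset_shell F (ga a)
  have hcomp : FComplete F (ga (al (shellF F (ga a)))) := by
    rcases hcond with h | h
    · have h1 : al (shellF F (ga a)) ≤ al (mClose (imageF F (shellF F (ga a)))) :=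
        hmono _ _ (mClose_moore _) hsm (mClose_min hsm hsc)
      rw [h _ hsm] at h1
      exact (subset_mClose _).trans ((hadj _ (mClose_moore _) _).1 h1)
    · obtain ⟨c, hc⟩ := h a
      rw [← hc] at hsc ⊢
      rw [hins]
      exact hsc
  have hstep' : ∀ i < n, ∃ f ∈ F, ∃ S ∈ refinersA al ga f (seq i),
      seq (i + 1) = refineA al ga f S (seq i) := by
    intro i hi
    rcases hstep i hi with ⟨S, hS, h⟩ | ⟨f, hf, -, S, hS, h⟩
    · exact ⟨g, hgF, S, hsub _ hS, h⟩
    · exact ⟨f, hf, S, hS, h⟩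
  have hinv : ∀ i ≤ n, seq i ≤ a ∧ al (shellF F (ga a)) ≤ seq i := by
    intro i
    induction i with
    | zero =>
      intro _
      rw [h0]
      refine ⟨le_rfl, ?_⟩
      have := hmono _ _ (hga a) hsm hss
      rwa [hins] at this
    | succ i ih =>
      intro hi
      obtain ⟨ih1, ih2⟩ := ih (by omega)
      obtain ⟨f, hf, S, hS, h⟩ := hstep' i (by omega)
      rw [h]
      refine ⟨hS.2.le.trans ih1, (hadj _ (mClose_moore _) _).2 (mClose_min (hga _) ?_)⟩
      have h3 := hanti _ _ ih2
      rintro T (hT | hT)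
      · exact h3 hT
      · rw [Set.mem_singleton_iff] at hT
        exact hcomp ⟨f, hf, S, fun j => h3 (hS.1 j), hT⟩
  obtain ⟨hn1, hn2⟩ := hinv n le_rfl
  refine le_antisymm ?_ hn2
  rw [hadj _ hsm]
  have hend : ∀ f ∈ F, refinersA al ga f (seq n) = ∅ := by
    intro f hf
    by_cases hfg : f = g
    · subst hfg
      exact (hsubeq _).1 hend1
    · exact hend2 f hf hfg
  have hfin : FComplete F (ga (seq n)) := by
    rintro T ⟨f, hf, S, hS, rfl⟩
    have hle : refineA al ga f S (seq n) ≤ seq n := by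
      have := hmono (ga (seq n)) (mClose (ga (seq n) ∪ {f.2 S})) (hga _) (mClose_moore _)
        (Set.subset_union_left.trans (subset_mClose _))
      rwa [hins] at this
    have hnot : ¬ refineA al ga f S (seq n) < seq n := fun hlt =>
      Set.eq_empty_iff_forall_notMem.1 (hend f hf) S ⟨hS, hlt⟩
    have heq : seq n ≤ refineA al ga f S (seq n) := (eq_of_le_of_not_lt hle hnot).ge
    exact (hadj _ (mClose_moore _) _).1 heq (subset_mClose _ (Or.inr rfl))
  exact fun T hT => hT _ ⟨hga _, hfin, hanti _ _ hn1⟩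
end

section
/- Let Σ be a set. For every Moore family ℳ on Σ and every partition P of Σ: every member of ℳ is P-saturated (i.e. ℳ ⊆ pad(P)) if and only if P refines pr(ℳ). Moreover, pr(pad(P)) = P for every partition P. (Hence pr and pad form a Galois insertion of the dual lattice of partitions of Σ into the dual lattice of Moore families on Σ.) -/
set_option linter.unusedVariables false

universe u v

variable {X : Type u} {A : Type v}

theorem prS_iff_aux (M : Set (Set X)) (s t : X) :
    mu M {s} = mu M {t} ↔ ∀ T ∈ M, (s ∈ T ↔ t ∈ T) := by
  constructor
  · intro h T hT
    have hs : s ∈ mu M {s} := fun U hU => hU.2 rfl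
    have ht : t ∈ mu M {t} := fun U hU => hU.2 rfl
    rw [h] at hs
    rw [← h] at ht
    exact ⟨fun h1 => ht T ⟨hT, by simpa using h1⟩, fun h1 => hs T ⟨hT, by simpa using h1⟩⟩
  · intro h
    unfold mu
    congr 1
    ext T
    simp only [Set.mem_setOf_eq, Set.singleton_subset_iff]
    exact and_congr_right (h T)

theorem stmt15 :
    (∀ M : Set (Set X), IsMoore M → ∀ P : Setoid X,
      (M ⊆ padS P ↔ refines P (prS M))) ∧
    (∀ P : Setoid X, prS (padS P) = P) := by
  refine ⟨fun M _ P => ⟨fun h s t hst => ?_, fun h T hT s hs t hst => ?_⟩, fun P => ?_⟩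
  · exact (prS_iff_aux M s t).2 fun T hT =>
      ⟨fun hs => h hT s hs t hst, fun ht => h hT t ht s (P.iseqv.symm hst)⟩
  · exact ((prS_iff_aux M s t).1 (h s t hst) T hT).1 hs
  · refine Setoid.ext fun s t => ?_
    refine (prS_iff_aux (padS P) s t).trans ⟨fun h => ?_, fun hst T hT => ?_⟩
    · exact (h {x | P.r s x} (fun a ha b hab => P.iseqv.trans ha hab)).1 (P.iseqv.refl s)
    · exact ⟨fun hs => hT s hs t hst, fun ht => hT t ht s (P.iseqv.symm hst)⟩
end
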